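/- Let A be a Banach algebra with a bounded approximate identity and suppose A has an envelope B which is approximately amenable. Then A is approximately amenable: for every Banach A-bimodule X and every bounded derivation D : A → X*, there is a net (φ_γ) in X* such that D(a) = lim_γ (a·φ_γ − φ_γ·a) in norm for every a ∈ A. -/

import Mathlib

noncomputable section

/-- A Banach `A`-bimodule structure on a Banach space `X`: bounded bilinear left and right
actions (encoded as continuous linear maps `l`, `r`, where `l a x = a·x` and `r a x = x·a`)
satisfying `(ab)·x = a·(b·x)`, `x·(ab) = (x·a)·b` and `(a·x)·b = a·(x·b)`. -/
structure BanachBimodule (A X : Type*) [NonUnitalNormedRing A] [NormedSpace ℂ A]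
    [NormedAddCommGroup X] [NormedSpace ℂ X] where
  l : A →L[ℂ] X →L[ℂ] X
  r : A →L[ℂ] X →L[ℂ] X
  l_mul : ∀ a b x, l (a * b) x = l a (l b x)
  r_mul : ∀ a b x, r (a * b) x = r b (r a x)
  l_r : ∀ a b x, r b (l a x) = l a (r b x)

variable {A X : Type*} [NonUnitalNormedRing A] [NormedSpace ℂ A]
  [IsScalarTower ℂ A A] [SMulCommClass ℂ A A] [CompleteSpace A]
  [NormedAddCommGroup X] [NormedSpace ℂ X] [CompleteSpace X]

/-- `(S, T)` is a double centralizer from `A` into `X`: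
`S(αa) = S(α)·a`, `T(aα) = a·T(α)` and `a·S(α) = T(a)·α`. -/
def IsDoubleCentralizer (M : BanachBimodule A X) (S T : A →L[ℂ] X) : Prop :=
  (∀ α a : A, S (α * a) = M.r a (S α)) ∧
  (∀ a α : A, T (a * α) = M.l a (T α)) ∧
  (∀ a α : A, M.l a (S α) = M.r α (T a))

/-- The canonical bounded linear map `ι_X : x ↦ (L_x, R_x)` where `L_x a = x·a`,
`R_x a = a·x`. -/
def iotaDC (M : BanachBimodule A X) : X →L[ℂ] (A →L[ℂ] X) × (A →L[ℂ] X) :=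
  M.r.flip.prod M.l.flip

/-- `B` is an *envelope* of `A`: `A` is a two-sided ideal of `B` with bounded injective
inclusion `incl : A → B be` (an algebra homomorphism), the products `ba` and `ab`
(`b ∈ B`, `a ∈ A`) are given by `lmul b a` and `rmul b a` inside `A`, and
`max (‖ba‖, ‖ab‖) ≤ C·‖a‖·‖b‖` for some `C > 0`. -/
structure Envelope (A B : Type*) [NonUnitalNormedRing A] [NormedSpace ℂ A]
    [NonUnitalNormedRing B] [NormedSpace ℂ B] where
  incl : A →L[ℂ] B
  incl_mul : ∀ a c : A, incl (a * c) = incl a * incl c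
  incl_inj : Function.Injective incl
  lmul : B →L[ℂ] A →L[ℂ] A
  rmul : B →L[ℂ] A →L[ℂ] A
  incl_lmul : ∀ (b : B) (a : A), incl (lmul b a) = b * incl a
  incl_rmul : ∀ (b : B) (a : A), incl (rmul b a) = incl a * b
  norm_bound : ∃ C > 0, ∀ (b : B) (a : A), max ‖lmul b a‖ ‖rmul b a‖ ≤ C * ‖a‖ * ‖b‖

variable {B : Type*} [NonUnitalNormedRing B] [NormedSpace ℂ B]
  [IsScalarTower ℂ B B] [SMulCommClass ℂ B B] [CompleteSpace B]

/-- Restriction of a Banach `B`-bimodule structure along the inclusion `A → B`,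
making `X` a Banach `A`-bimodule. -/
def BanachBimodule.restrict (M : BanachBimodule B X) (E : Envelope A B) :
    BanachBimodule A X where
  l := M.l.comp E.incl
  r := M.r.comp E.incl
  l_mul := by
    intro a b x
    simp only [ContinuousLinearMap.comp_apply, E.incl_mul, M.l_mul]
  r_mul := by
    intro a b x
    simp only [ContinuousLinearMap.comp_apply, E.incl_mul, M.r_mul]
  l_r := by
    intro a b x
    simp only [ContinuousLinearMap.comp_apply, M.l_r]

/-- A bounded approximate identity for `A`. -/
def HasBAI (A : Type*) [NonUnitalNormedRing A] [NormedSpace ℂ A] : Prop :=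
  ∃ (ι : Type) (p : Filter ι) (e : ι → A), p.NeBot ∧ (∃ C : ℝ, ∀ i, ‖e i‖ ≤ C) ∧
    ∀ a : A, Filter.Tendsto (fun i => e i * a) p (nhds a) ∧
      Filter.Tendsto (fun i => a * e i) p (nhds a)

/-- `C` is approximately amenable: for every Banach `C`-bimodule `X`, every bounded
derivation `D : C → X*` is approximately inner: there is a net `(φ_γ)` in `X*` with
`D(c) = lim_γ (c·φ_γ − φ_γ·c)` in norm for every `c`. -/
def IsApproxAmenable.{u} (C : Type*) [NonUnitalNormedRing C] [NormedSpace ℂ C]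
    [CompleteSpace C] : Prop :=
  ∀ (X : Type u) [NormedAddCommGroup X] [NormedSpace ℂ X] [CompleteSpace X],
    ∀ (M : BanachBimodule C X) (D : C →L[ℂ] X →L[ℂ] ℂ),
      (∀ b c : C, D (b * c) = (D c).comp (M.r b) + (D b).comp (M.l c)) →
      ∃ (ι : Type u) (p : Filter ι), p.NeBot ∧ ∃ φ : ι → (X →L[ℂ] ℂ),
        ∀ b : C, Filter.Tendsto (fun γ => (φ γ).comp (M.r b) - (φ γ).comp (M.l b)) p
          (nhds (D b))

/-!
Refine the approximate identity to an ultrafilter, so that bounded families of functionals have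
weak* limits along it. For a derivation `D : A → X*` let `η` be the weak* limit of `D(e_i)` and `ζ`
that of `x ↦ η(e_i·x)`. Then `D(a) - ad (η - 2ζ) (a)` is the weak* limit of
`x ↦ D(a)(e_i·x·e_i)`, so up to an inner derivation `D` only sees the essential part `Y` of `X`.
Functionals on `Y` are pulled back to `X` by the same compressions `x ↦ e_i·x·e_i`, with a norm
bound, and therefore `D` is approximately inner as soon as its restriction to `Y` is.

Elements `a·y` are dense in `Y`, and so are elements `y·a`. Hence `b·(a·y) = (ba)·y` and
`(y·a)·b = y·(ab)` make `Y` a Banach `B`-bimodule, and `D` extends to a derivation on `B` by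
`D'(b)(a·y) = D(ba)(y) - D(a)(y·b)`. An approximating net for `D'` is one for `D`.
-/

section Limits

open Filter Topology

variable {𝕜 ι E F G : Type*} [NontriviallyNormedField 𝕜]
  [SeminormedAddCommGroup E] [NormedSpace 𝕜 E] [SeminormedAddCommGroup F] [NormedSpace 𝕜 F]
  [NormedAddCommGroup G] [NormedSpace 𝕜 G] {p : Filter ι} {K : ℝ}

theorem equicontinuous_of_opNorm_le {T : ι → E →L[𝕜] F} (hT : ∀ i, ‖T i‖ ≤ K) :
    Equicontinuous fun i => ⇑(T i) :=
  have h : Equicontinuous (DFunLike.coe ∘ T) ↔ ∃ C, ∀ i, ‖T i‖ ≤ C :=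
    (NormedSpace.equicontinuous_TFAE T).out 1 5
  h.2 ⟨K, hT⟩

theorem tendsto_commutator_of_isApproximateUnit {R : Type*} [NonUnitalNonAssocRing R]
    [TopologicalSpace R] [IsTopologicalAddGroup R] {e : ι → R} (he : (p.map e).IsApproximateUnit)
    (a : R) : Tendsto (fun i => e i * a - a * e i) p (𝓝 0) := by
  simpa using (tendsto_map'_iff.1 (he.tendsto_mul_right a)).sub
    (tendsto_map'_iff.1 (he.tendsto_mul_left a))

theorem tendsto_clm_apply₂ (T : E →L[𝕜] F →L[𝕜] G) {u : ι → E} {a : E} (hu : Tendsto u p (𝓝 a))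
    (x : F) : Tendsto (fun i => T (u i) x) p (𝓝 (T a x)) :=
  ((T.flip x).continuous.tendsto a).comp hu

theorem tendsto_apply_of_opNorm_le {T : ι → E →L[𝕜] F} (hT : ∀ i, ‖T i‖ ≤ K) {u : ι → E} {x : E}
    (hu : Tendsto u p (𝓝 x)) {y : F} (hy : Tendsto (fun i => T i x) p (𝓝 y)) :
    Tendsto (fun i => T i (u i)) p (𝓝 y) := by
  have hdiff : Tendsto (fun i => T i (u i - x)) p (𝓝 0) := by
    refine squeeze_zero_norm (fun i => (T i).le_of_opNorm_le (hT i) _) ?_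
    simpa using (tendsto_iff_norm_sub_tendsto_zero.1 hu).const_mul K
  simpa using hdiff.add hy

theorem exists_tendsto_of_denseRange [CompleteSpace F] [p.NeBot] {κ : Type*} {f : κ → E}
    (hf : DenseRange f) {T : ι → E →L[𝕜] F} (hT : ∀ i, ‖T i‖ ≤ K)
    (h : ∀ k, ∃ y, Tendsto (fun i => T i (f k)) p (𝓝 y)) (x : E) :
    ∃ y, Tendsto (fun i => T i x) p (𝓝 y) := by
  refine cauchy_map_iff_exists_tendsto.1 (Metric.cauchy_iff.2 ⟨inferInstance, fun ε hε => ?_⟩)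
  obtain ⟨δ, hδ, hequi⟩ := Metric.equicontinuousAt_iff.1
    (equicontinuous_of_opNorm_le hT x) (ε / 4) (by positivity)
  obtain ⟨k, hk⟩ := hf.exists_dist_lt x hδ
  obtain ⟨y, hy⟩ := h k
  have hball : ∀ᶠ i in p, T i x ∈ Metric.ball y (ε / 2) := by
    filter_upwards [Metric.tendsto_nhds.1 hy (ε / 4) (by positivity)] with i hi
    have hnear := hequi (f k) (by rwa [dist_comm]) i
    rw [Metric.mem_ball]
    linarith [dist_triangle (T i x) (T i (f k)) y]
  refine ⟨_, hball, fun u hu v hv => ?_⟩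
  rw [Metric.mem_ball] at hu hv
  linarith [dist_triangle_right u v y]

theorem exists_bilinear_tendsto [p.NeBot] {T : ι → E →L[𝕜] F →L[𝕜] G} (hT : ∀ i, ‖T i‖ ≤ K)
    (h : ∀ x y, ∃ z, Tendsto (fun i => T i x y) p (𝓝 z)) :
    ∃ S : E →L[𝕜] F →L[𝕜] G, ∀ x y, Tendsto (fun i => T i x y) p (𝓝 (S x y)) := by
  choose S hS using h
  have hbound (x : E) (y : F) : ‖S x y‖ ≤ K * ‖x‖ * ‖y‖ :=
    le_of_tendsto (hS x y).norm <| .of_forall fun i =>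
      (T i).le_of_opNorm₂_le_of_le (hT i) le_rfl le_rfl
  refine ⟨(LinearMap.mk₂ 𝕜 S (fun x x' y => ?_) (fun c x y => ?_) (fun x y y' => ?_)
    (fun c x y => ?_)).mkContinuous₂ K hbound, hS⟩
  · exact tendsto_nhds_unique (hS _ y) (by simpa using (hS x y).add (hS x' y))
  · exact tendsto_nhds_unique (hS _ y) (by simpa using (hS x y).const_smul c)
  · exact tendsto_nhds_unique (hS x _) (by simpa using (hS x y).add (hS x y'))
  · exact tendsto_nhds_unique (hS x _) (by simpa using (hS x y).const_smul c)

theorem exists_bilinear_tendsto_comp [CompleteSpace G] [p.NeBot] {E₁ E₂ κ : Type*}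
    [SeminormedAddCommGroup E₁] [NormedSpace 𝕜 E₁] [SeminormedAddCommGroup E₂] [NormedSpace 𝕜 E₂]
    (T : E →L[𝕜] F →L[𝕜] G) (m : E₁ →L[𝕜] E₂ →L[𝕜] E) {e : ι → E₂} (he : ∀ i, ‖e i‖ ≤ K)
    {f : κ → F} (hf : DenseRange f)
    (h : ∀ x k, ∃ z, Tendsto (fun i => T (m x (e i)) (f k)) p (𝓝 z)) :
    ∃ S : E₁ →L[𝕜] F →L[𝕜] G, ∀ x y, Tendsto (fun i => T (m x (e i)) y) p (𝓝 (S x y)) := by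
  have hT (i : ι) : ‖T.comp (m.flip (e i))‖ ≤ ‖T‖ * (‖m.flip‖ * K) :=
    (T.opNorm_comp_le _).trans
      (mul_le_mul_of_nonneg_left (m.flip.le_opNorm_of_le (he i)) (norm_nonneg T))
  refine exists_bilinear_tendsto (T := fun i => T.comp (m.flip (e i))) hT fun x => ?_
  exact exists_tendsto_of_denseRange (T := fun i => T.comp (m.flip (e i)) x) hf
    (fun i => (T.comp (m.flip (e i))).le_of_opNorm_le (hT i) x) (h x)

theorem exists_dual_tendsto [ProperSpace 𝕜] (U : Ultrafilter ι) {φ : ι → E →L[𝕜] 𝕜}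
    (hφ : ∀ i, ‖φ i‖ ≤ K) : ∃ η : E →L[𝕜] 𝕜, ∀ x, Tendsto (fun i => φ i x) U (𝓝 (η x)) := by
  obtain ⟨η, -, hη⟩ := (WeakDual.isCompact_closedBall (0 : StrongDual 𝕜 E) K).ultrafilter_le_nhds
    (U.map fun i => StrongDual.toWeakDual (φ i))
    (le_principal_iff.2 <| Eventually.of_forall (f := (U : Filter ι)) fun i => by
      simpa using hφ i)
  exact ⟨WeakDual.toStrongDual η, fun x => ((WeakDual.eval_continuous x).tendsto η).comp hη⟩

theorem clm_eq_of_denseRange {κ : Type*} {f : κ → E} (hf : DenseRange f) {S T : E →L[𝕜] G}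
    (h : ∀ k, S (f k) = T (f k)) : S = T :=
  DFunLike.coe_injective <| hf.equalizer S.continuous T.continuous (funext h)

end Limits

section ApproximateIdentity

open Filter

theorem HasBAI.exists_ultrafilter {A : Type*} [NonUnitalNormedRing A] [NormedSpace ℂ A]
    (h : HasBAI A) : ∃ (ι : Type) (U : Ultrafilter ι) (e : ι → A) (C : ℝ),
      (∀ i, ‖e i‖ ≤ C) ∧ ((U : Filter ι).map e).IsApproximateUnit := by
  obtain ⟨ι, p, e, hp, ⟨C, hC⟩, he⟩ := h
  have hU : ↑(Ultrafilter.of p) ≤ p := Ultrafilter.of_le p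
  exact ⟨ι, Ultrafilter.of p, e, C, hC,
    { tendsto_mul_left a := tendsto_map'_iff.2 ((he a).2.mono_left hU)
      tendsto_mul_right a := tendsto_map'_iff.2 ((he a).1.mono_left hU) }⟩

end ApproximateIdentity

section Derivations

open Filter Topology

universe u

variable {A : Type*} {X : Type u} [NonUnitalNormedRing A] [NormedSpace ℂ A]
  [NormedAddCommGroup X] [NormedSpace ℂ X] {ι : Type*} {p : Filter ι} {e : ι → A} {C : ℝ}

/-- The restriction of a bilinear action `m` of `E` on `F` to an invariant subspace. -/
def restrictBilinear {E F : Type*} [NormedAddCommGroup E] [NormedSpace ℂ E]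
    [NormedAddCommGroup F] [NormedSpace ℂ F] (m : E →L[ℂ] F →L[ℂ] F) (Y : Submodule ℂ F)
    (h : ∀ a, ∀ x ∈ Y, m a x ∈ Y) : E →L[ℂ] Y →L[ℂ] Y :=
  (LinearMap.mk₂ ℂ (fun a (x : Y) => (⟨m a x, h a x x.2⟩ : Y))
    (fun _ _ _ => by ext; simp) (fun _ _ _ => by ext; simp)
    (fun _ _ _ => by ext; simp) (fun _ _ _ => by ext; simp)).mkContinuous₂
    ‖m‖ fun a x => m.le_opNorm₂ a x

/-- The restriction to a subspace `Y` of the functionals `D a`, as a map `A → Y*`. -/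
def restrictDual (D : A →L[ℂ] X →L[ℂ] ℂ) (Y : Submodule ℂ X) : A →L[ℂ] Y →L[ℂ] ℂ :=
  (ContinuousLinearMap.precomp ℂ Y.subtypeL).comp D

namespace BanachBimodule

/-- `D : A → X*` is a derivation for the actions `(a·φ)(x) = φ(x·a)` and `(φ·a)(x) = φ(a·x)` of
`A` on `X*`. -/
def IsDerivation (M : BanachBimodule A X) (D : A →L[ℂ] X →L[ℂ] ℂ) : Prop :=
  ∀ a b : A, D (a * b) = (D b).comp (M.r a) + (D a).comp (M.l b)

/-- The inner derivation `a ↦ a·φ − φ·a` of `A` into `X*`. -/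
def ad (M : BanachBimodule A X) (φ : X →L[ℂ] ℂ) (a : A) : X →L[ℂ] ℂ :=
  φ.comp (M.r a) - φ.comp (M.l a)

/-- `D : A → X*` is the pointwise norm limit of a net of inner derivations. -/
def IsApproxInner (M : BanachBimodule A X) (D : A →L[ℂ] X →L[ℂ] ℂ) : Prop :=
  ∃ (κ : Type u) (q : Filter κ), q.NeBot ∧ ∃ φ : κ → (X →L[ℂ] ℂ),
    ∀ a, Tendsto (fun k => M.ad (φ k) a) q (𝓝 (D a))

variable {M : BanachBimodule A X} {D : A →L[ℂ] X →L[ℂ] ℂ} {η : X →L[ℂ] ℂ}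

theorem ad_apply (φ : X →L[ℂ] ℂ) (a : A) (x : X) :
    M.ad φ a x = φ (M.r a x) - φ (M.l a x) := rfl

theorem IsDerivation.map_mul_apply (hD : M.IsDerivation D) (a b : A) (x : X) :
    D (a * b) x = D b (M.r a x) + D a (M.l b x) := by
  rw [hD]; rfl

variable (M) in
theorem norm_l_apply_le (hC : ∀ i, ‖e i‖ ≤ C) (i : ι) : ‖M.l (e i)‖ ≤ ‖M.l‖ * C :=
  M.l.le_opNorm_of_le (hC i)

variable (M) in
theorem norm_r_apply_le (hC : ∀ i, ‖e i‖ ≤ C) (i : ι) : ‖M.r (e i)‖ ≤ ‖M.r‖ * C :=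
  M.r.le_opNorm_of_le (hC i)

variable (M) in
theorem tendsto_l_l (he : (p.map e).IsApproximateUnit) (a : A) (x : X) :
    Tendsto (fun i => M.l (e i) (M.l a x)) p (𝓝 (M.l a x)) := by
  simpa only [← M.l_mul, Function.comp_def] using
    tendsto_clm_apply₂ M.l (tendsto_map'_iff.1 (he.tendsto_mul_right a)) x

variable (M) in
theorem tendsto_r_r (he : (p.map e).IsApproximateUnit) (a : A) (x : X) :
    Tendsto (fun i => M.r (e i) (M.r a x)) p (𝓝 (M.r a x)) := by
  simpa only [← M.r_mul, Function.comp_def] using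
    tendsto_clm_apply₂ M.r (tendsto_map'_iff.1 (he.tendsto_mul_left a)) x

namespace IsDerivation

theorem tendsto_apply_l (hD : M.IsDerivation D) (he : (p.map e).IsApproximateUnit)
    (hη : ∀ x, Tendsto (fun i => D (e i) x) p (𝓝 (η x))) (a : A) (x : X) :
    Tendsto (fun i => D a (M.l (e i) x)) p (𝓝 (D a x - η (M.r a x))) := by
  have hmul := tendsto_clm_apply₂ D (tendsto_map'_iff.1 (he.tendsto_mul_left a)) x
  refine (hmul.sub (hη (M.r a x))).congr fun i => ?_
  simp only [Function.comp_apply, hD.map_mul_apply, add_sub_cancel_left]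

theorem weakStarLimit_apply_r_l [p.NeBot] (hD : M.IsDerivation D)
    (he : (p.map e).IsApproximateUnit) (hη : ∀ x, Tendsto (fun i => D (e i) x) p (𝓝 (η x)))
    (a b : A) (x : X) : η (M.r a (M.l b x)) = 0 := by
  have hD_lim : Tendsto (fun i => D a (M.l (e i) (M.l b x))) p (𝓝 (D a (M.l b x))) :=
    ((D a).continuous.tendsto _).comp (M.tendsto_l_l he b x)
  exact sub_eq_self.1 (tendsto_nhds_unique hD_lim (hD.tendsto_apply_l he hη a (M.l b x))).symm

theorem tendsto_apply_l_r (hD : M.IsDerivation D) (he : (p.map e).IsApproximateUnit)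
    (hC : ∀ i, ‖e i‖ ≤ C) (hη : ∀ x, Tendsto (fun i => D (e i) x) p (𝓝 (η x))) (a : A) (x : X) :
    Tendsto (fun i => D a (M.l (e i) (M.r (e i) x))) p
      (𝓝 (D a x - η (M.r a x) - η (M.l a x))) := by
  have hright : Tendsto (fun i => D (e i * a) (M.l (e i) x)) p (𝓝 (D a x - η (M.r a x))) :=
    tendsto_apply_of_opNorm_le (T := fun i => D.flip (M.l (e i) x))
      (fun i => D.flip.le_opNorm_of_le <| (M.l (e i)).le_of_opNorm_le (M.norm_l_apply_le hC i) x)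
      (tendsto_map'_iff.1 (he.tendsto_mul_right a)) (hD.tendsto_apply_l he hη a x)
  have hleft : Tendsto (fun i => D (e i) (M.l (a * e i) x)) p (𝓝 (η (M.l a x))) :=
    tendsto_apply_of_opNorm_le (fun i => D.le_opNorm_of_le (hC i))
      (tendsto_clm_apply₂ M.l (tendsto_map'_iff.1 (he.tendsto_mul_left a)) x) (hη _)
  refine (hright.sub hleft).congr fun i => ?_
  rw [hD.map_mul_apply, ← M.l_mul, add_sub_cancel_right, M.l_r]

theorem exists_tendsto_sub_ad {U : Ultrafilter ι} (hD : M.IsDerivation D)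
    (he : ((U : Filter ι).map e).IsApproximateUnit) (hC : ∀ i, ‖e i‖ ≤ C) :
    ∃ θ : X →L[ℂ] ℂ, ∀ a x,
      Tendsto (fun i => D a (M.l (e i) (M.r (e i) x))) U (𝓝 ((D a - M.ad θ a) x)) := by
  obtain ⟨η, hη⟩ := exists_dual_tendsto U fun i => D.le_opNorm_of_le (hC i)
  obtain ⟨ζ, hζ⟩ := exists_dual_tendsto U fun i =>
    (η.opNorm_comp_le (M.l (e i))).trans
      (mul_le_mul_of_nonneg_left (M.norm_l_apply_le hC i) (norm_nonneg η))
  have hζ_r (a : A) (x : X) : ζ (M.r a x) = 0 := by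
    refine tendsto_nhds_unique (hζ (M.r a x)) (tendsto_const_nhds.congr fun i => ?_)
    rw [ContinuousLinearMap.comp_apply, ← M.l_r, hD.weakStarLimit_apply_r_l he hη]
  have hζ_l (a : A) (x : X) : ζ (M.l a x) = η (M.l a x) :=
    tendsto_nhds_unique (hζ (M.l a x)) ((η.continuous.tendsto _).comp (M.tendsto_l_l he a x))
  -- As `ζ` vanishes on `X·A` and equals `η` on `A·X`, `ad (η - 2ζ) a x = η (x·a) + η (a·x)`.
  refine ⟨η - (2 : ℂ) • ζ, fun a x => ?_⟩
  convert hD.tendsto_apply_l_r he hC hη a x using 2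
  simp only [sub_apply, smul_apply, ad_apply, hζ_r, hζ_l, smul_eq_mul]
  ring

end IsDerivation

/-- The Banach bimodule structure on a subspace of `X` stable under both actions. -/
def ofInvariant (M : BanachBimodule A X) (Y : Submodule ℂ X) (hl : ∀ a, ∀ x ∈ Y, M.l a x ∈ Y)
    (hr : ∀ a, ∀ x ∈ Y, M.r a x ∈ Y) : BanachBimodule A Y where
  l := restrictBilinear M.l Y hl
  r := restrictBilinear M.r Y hr
  l_mul a b x := Subtype.ext (M.l_mul a b x)
  r_mul a b x := Subtype.ext (M.r_mul a b x)
  l_r a b x := Subtype.ext (M.l_r a b x)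

/-- The compression `x ↦ a·x·a`, as a map into a subspace containing `A·X·A`. -/
def compress (M : BanachBimodule A X) {Y : Submodule ℂ X} (hY : ∀ a b x, M.l a (M.r b x) ∈ Y)
    (a : A) : X →L[ℂ] Y :=
  ((M.l a).comp (M.r a)).codRestrict Y fun x => hY a a x

theorem coe_compress {Y : Submodule ℂ X} (hY : ∀ a b x, M.l a (M.r b x) ∈ Y) (a : A) (x : X) :
    (M.compress hY a x : X) = M.l a (M.r a x) := rfl

theorem norm_compress_le {Y : Submodule ℂ X} (hY : ∀ a b x, M.l a (M.r b x) ∈ Y)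
    (hC : ∀ i, ‖e i‖ ≤ C) (i : ι) :
    ‖M.compress hY (e i)‖ ≤ ‖M.l‖ * C * (‖M.r‖ * C) := by
  have hl := M.norm_l_apply_le hC i
  have hr := M.norm_r_apply_le hC i
  have hK : 0 ≤ ‖M.l‖ * C := (norm_nonneg _).trans hl
  refine ContinuousLinearMap.opNorm_le_bound _ (mul_nonneg hK ((norm_nonneg _).trans hr))
    fun x => ?_
  rw [mul_assoc]
  exact (M.l (e i)).le_of_opNorm_le_of_le hl ((M.r (e i)).le_of_opNorm_le hr x)

theorem tendsto_r_compress_sub {Y : Submodule ℂ X} (hY : ∀ a b x, M.l a (M.r b x) ∈ Y)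
    (he : (p.map e).IsApproximateUnit) (hC : ∀ i, ‖e i‖ ≤ C) (a : A) (x : X) :
    Tendsto (fun i => M.r a (M.compress hY (e i) x) - M.compress hY (e i) (M.r a x)) p
      (𝓝 0) := by
  have hr := tendsto_clm_apply₂ M.r (tendsto_commutator_of_isApproximateUnit he a) x
  refine (tendsto_apply_of_opNorm_le (M.norm_l_apply_le hC) hr (y := 0) ?_).congr fun i => ?_
  · simpa only [map_zero, zero_apply] using tendsto_const_nhds
  · simp only [coe_compress, map_sub, sub_apply, M.l_r, M.r_mul]

theorem tendsto_l_compress_sub {Y : Submodule ℂ X} (hY : ∀ a b x, M.l a (M.r b x) ∈ Y)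
    (he : (p.map e).IsApproximateUnit) (hC : ∀ i, ‖e i‖ ≤ C) (a : A) (x : X) :
    Tendsto (fun i => M.l a (M.compress hY (e i) x) - M.compress hY (e i) (M.l a x)) p
      (𝓝 0) := by
  have hcomm := (tendsto_commutator_of_isApproximateUnit he a).neg
  have hl := tendsto_clm_apply₂ M.l (neg_zero (G := A) ▸ hcomm) x
  refine (tendsto_apply_of_opNorm_le (M.norm_r_apply_le hC) hl (y := 0) ?_).congr fun i => ?_
  · simpa only [map_zero, zero_apply] using tendsto_const_nhds
  · simp only [coe_compress, map_sub, sub_apply, neg_sub, ← M.l_r, M.l_mul]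

section Invariant

variable {Y : Submodule ℂ X} (hl : ∀ a, ∀ x ∈ Y, M.l a x ∈ Y) (hr : ∀ a, ∀ x ∈ Y, M.r a x ∈ Y)

theorem exists_tendsto_ad_compress {U : Ultrafilter ι} (hY : ∀ a b x, M.l a (M.r b x) ∈ Y)
    (he : ((U : Filter ι).map e).IsApproximateUnit) (hC : ∀ i, ‖e i‖ ≤ C) (ψ : Y →L[ℂ] ℂ) :
    ∃ φ : X →L[ℂ] ℂ, ∀ a x,
      Tendsto (fun i => (M.ofInvariant Y hl hr).ad ψ a (M.compress hY (e i) x)) U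
        (𝓝 (M.ad φ a x)) := by
  obtain ⟨φ, hφ⟩ := exists_dual_tendsto U fun i =>
    (ψ.opNorm_comp_le (M.compress hY (e i))).trans
      (mul_le_mul_of_nonneg_left (norm_compress_le hY hC i) (norm_nonneg ψ))
  have hψ {u : ι → Y} (hu : Tendsto (fun i => (u i : X)) U (𝓝 0)) :
      Tendsto (fun i => ψ (u i)) U (𝓝 0) :=
    map_zero ψ ▸ (ψ.continuous.tendsto 0).comp (tendsto_subtype_rng.2 hu)
  refine ⟨φ, fun a x => ?_⟩
  have hψr := hψ (u := fun i => (M.ofInvariant Y hl hr).r a (M.compress hY (e i) x) -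
    M.compress hY (e i) (M.r a x)) (tendsto_r_compress_sub hY he hC a x)
  have hψl := hψ (u := fun i => (M.ofInvariant Y hl hr).l a (M.compress hY (e i) x) -
    M.compress hY (e i) (M.l a x)) (tendsto_l_compress_sub hY he hC a x)
  simpa [ad_apply] using (hψr.add (hφ (M.r a x))).sub (hψl.add (hφ (M.l a x)))

theorem IsDerivation.restrict (hD : M.IsDerivation D) :
    (M.ofInvariant Y hl hr).IsDerivation (restrictDual D Y) :=
  fun a b => by ext x; exact hD.map_mul_apply a b x

theorem IsDerivation.exists_norm_sub_ad_le {U : Ultrafilter ι} (hD : M.IsDerivation D)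
    (hY : ∀ a b x, M.l a (M.r b x) ∈ Y) (he : ((U : Filter ι).map e).IsApproximateUnit)
    (hC : ∀ i, ‖e i‖ ≤ C) (ψ : Y →L[ℂ] ℂ) :
    ∃ φ : X →L[ℂ] ℂ, ∀ a, ‖M.ad φ a - D a‖ ≤
      ‖(M.ofInvariant Y hl hr).ad ψ a - restrictDual D Y a‖ * (‖M.l‖ * C * (‖M.r‖ * C)) := by
  obtain ⟨θ, hθ⟩ := hD.exists_tendsto_sub_ad he hC
  obtain ⟨φ, hφ⟩ := exists_tendsto_ad_compress hl hr hY he hC ψ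
  refine ⟨θ + φ, fun a => ?_⟩
  set δ := (M.ofInvariant Y hl hr).ad ψ a - restrictDual D Y a
  have hlim (x : X) : Tendsto (fun i => δ (M.compress hY (e i) x)) U
      (𝓝 ((M.ad (θ + φ) a - D a) x)) := by
    have hval : (M.ad (θ + φ) a - D a) x = M.ad φ a x - (D a - M.ad θ a) x := by
      simp only [ad_apply, sub_apply, add_apply]
      ring
    rw [hval]
    exact (hφ a x).sub (hθ a x)
  have hbound (i : ι) : ‖δ.comp (M.compress hY (e i))‖ ≤ ‖δ‖ * (‖M.l‖ * C * (‖M.r‖ * C)) :=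
    (δ.opNorm_comp_le _).trans
      (mul_le_mul_of_nonneg_left (norm_compress_le hY hC i) (norm_nonneg δ))
  obtain ⟨i⟩ := U.neBot.nonempty
  refine ContinuousLinearMap.opNorm_le_bound _ ((norm_nonneg _).trans (hbound i)) fun x => ?_
  exact le_of_tendsto (hlim x).norm <| .of_forall fun i =>
    (δ.comp (M.compress hY (e i))).le_of_opNorm_le (hbound i) x

theorem IsApproxInner.of_ofInvariant {U : Ultrafilter ι} (hY : ∀ a b x, M.l a (M.r b x) ∈ Y)
    (hD : M.IsDerivation D) (he : ((U : Filter ι).map e).IsApproximateUnit) (hC : ∀ i, ‖e i‖ ≤ C)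
    (h : (M.ofInvariant Y hl hr).IsApproxInner (restrictDual D Y)) : M.IsApproxInner D := by
  obtain ⟨κ, q, hq, ψ, hψ⟩ := h
  choose φ hφ using fun k => hD.exists_norm_sub_ad_le hl hr hY he hC (ψ k)
  refine ⟨κ, q, hq, φ, fun a => tendsto_iff_norm_sub_tendsto_zero.2 ?_⟩
  refine squeeze_zero (fun k => norm_nonneg _) (fun k => hφ k a) ?_
  simpa using (tendsto_iff_norm_sub_tendsto_zero.1 (hψ a)).mul_const _

end Invariant

end BanachBimodule
end Derivations

section Essential

open Filter Topology

variable {A X : Type*} [NonUnitalNormedRing A] [NormedSpace ℂ A]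
  [NormedAddCommGroup X] [NormedSpace ℂ X] {ι : Type*} {p : Filter ι} {e : ι → A} {C : ℝ}

namespace BanachBimodule

/-- The part of `X` on which `e`, thought of as an approximate identity along `p`, converges to the
identity on both sides. By Cohen's factorization theorem it is `A·X·A` when `e` is a bounded
approximate identity; this description makes it visibly a subspace. -/
def essentialPart (M : BanachBimodule A X) (p : Filter ι) (e : ι → A) : Submodule ℂ X where
  carrier := {x | Tendsto (fun i => M.l (e i) x) p (𝓝 x) ∧ Tendsto (fun i => M.r (e i) x) p (𝓝 x)}
  zero_mem' := by simpa using tendsto_const_nhds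
  add_mem' hx hy := by
    simpa only [Set.mem_ofPred_eq, map_add] using ⟨hx.1.add hy.1, hx.2.add hy.2⟩
  smul_mem' c x hx := by
    simpa only [Set.mem_ofPred_eq, map_smul] using ⟨hx.1.const_smul c, hx.2.const_smul c⟩

variable {M : BanachBimodule A X}

variable (M) in
theorem isClosed_essentialPart (hC : ∀ i, ‖e i‖ ≤ C) :
    IsClosed (M.essentialPart p e : Set X) :=
  ((equicontinuous_of_opNorm_le (M.norm_l_apply_le hC)).isClosed_setOfPred_tendsto
      continuous_id).inter
    ((equicontinuous_of_opNorm_le (M.norm_r_apply_le hC)).isClosed_setOfPred_tendsto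
      continuous_id)

theorem l_mem_essentialPart (he : (p.map e).IsApproximateUnit) (a : A) {x : X}
    (hx : x ∈ M.essentialPart p e) : M.l a x ∈ M.essentialPart p e := by
  refine ⟨M.tendsto_l_l he a x, ?_⟩
  simpa only [M.l_r, Function.comp_def] using ((M.l a).continuous.tendsto x).comp hx.2

theorem r_mem_essentialPart (he : (p.map e).IsApproximateUnit) (a : A) {x : X}
    (hx : x ∈ M.essentialPart p e) : M.r a x ∈ M.essentialPart p e := by
  refine ⟨?_, M.tendsto_r_r he a x⟩
  simpa only [M.l_r, Function.comp_def] using ((M.r a).continuous.tendsto x).comp hx.1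

variable (M) in
theorem l_r_mem_essentialPart (he : (p.map e).IsApproximateUnit) (a b : A) (x : X) :
    M.l a (M.r b x) ∈ M.essentialPart p e := by
  refine ⟨M.tendsto_l_l he a _, ?_⟩
  simpa only [M.l_r, Function.comp_def] using
    ((M.l a).continuous.tendsto _).comp (M.tendsto_r_r he b x)

variable (M) in
/-- The essential part of `M` as a Banach bimodule. -/
def essential (he : (p.map e).IsApproximateUnit) : BanachBimodule A (M.essentialPart p e) :=
  M.ofInvariant _ (fun a _ => l_mem_essentialPart he a) (fun a _ => r_mem_essentialPart he a)

theorem mem_essentialPart_essential (he : (p.map e).IsApproximateUnit)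
    (x : M.essentialPart p e) : x ∈ (M.essential he).essentialPart p e :=
  ⟨tendsto_subtype_rng.2 x.2.1, tendsto_subtype_rng.2 x.2.2⟩

theorem IsDerivation.restrict_essential {D : A →L[ℂ] X →L[ℂ] ℂ} (hD : M.IsDerivation D)
    (he : (p.map e).IsApproximateUnit) :
    (M.essential he).IsDerivation (restrictDual D (M.essentialPart p e)) :=
  hD.restrict _ _

theorem IsApproxInner.of_essential {U : Ultrafilter ι} {D : A →L[ℂ] X →L[ℂ] ℂ}
    {he : ((U : Filter ι).map e).IsApproximateUnit}
    (h : (M.essential he).IsApproxInner (restrictDual D (M.essentialPart U e)))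
    (hD : M.IsDerivation D) (hC : ∀ i, ‖e i‖ ≤ C) : M.IsApproxInner D :=
  .of_ofInvariant _ _ (M.l_r_mem_essentialPart he) hD he hC h

theorem denseRange_l [p.NeBot] (hM : ∀ x, x ∈ M.essentialPart p e) :
    DenseRange fun z : A × X => M.l z.1 z.2 := fun x =>
  mem_closure_of_tendsto (hM x).1 <| .of_forall fun i => ⟨(e i, x), rfl⟩

theorem denseRange_r [p.NeBot] (hM : ∀ x, x ∈ M.essentialPart p e) :
    DenseRange fun z : A × X => M.r z.1 z.2 := fun x =>
  mem_closure_of_tendsto (hM x).2 <| .of_forall fun i => ⟨(e i, x), rfl⟩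

end BanachBimodule

end Essential

section Extension

open Filter Topology

variable {A B X : Type*} [NonUnitalNormedRing A] [NormedSpace ℂ A] [NonUnitalNormedRing B]
  [NormedSpace ℂ B] [NormedAddCommGroup X] [NormedSpace ℂ X]

namespace Envelope

variable (E : Envelope A B)

theorem lmul_mul (b : B) (a c : A) : E.lmul b (a * c) = E.lmul b a * c :=
  E.incl_inj <| by simp only [E.incl_mul, E.incl_lmul, mul_assoc]

theorem rmul_mul (b : B) (a c : A) : E.rmul b (a * c) = a * E.rmul b c :=
  E.incl_inj <| by simp only [E.incl_mul, E.incl_rmul, mul_assoc]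

theorem lmul_mul_left (b c : B) (a : A) : E.lmul (b * c) a = E.lmul b (E.lmul c a) :=
  E.incl_inj <| by simp only [E.incl_lmul, mul_assoc]

theorem rmul_mul_left (b c : B) (a : A) : E.rmul (b * c) a = E.rmul c (E.rmul b a) :=
  E.incl_inj <| by simp only [E.incl_rmul, mul_assoc]

theorem lmul_incl (a c : A) : E.lmul (E.incl a) c = a * c :=
  E.incl_inj <| by simp only [E.incl_mul, E.incl_lmul]

theorem rmul_incl (a c : A) : E.rmul (E.incl a) c = c * a :=
  E.incl_inj <| by simp only [E.incl_mul, E.incl_rmul]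

end Envelope

namespace BanachBimodule

/-- The `B`-bimodule structure `N` on `X` extends the `A`-bimodule structure `M` along the inclusion
of `A` in its envelope `B`. -/
structure Extends (N : BanachBimodule B X) (E : Envelope A B) (M : BanachBimodule A X) : Prop where
  l_incl (a : A) : N.l (E.incl a) = M.l a
  r_incl (a : A) : N.r (E.incl a) = M.r a

variable {E : Envelope A B} {M : BanachBimodule A X} {N : BanachBimodule B X} {ι : Type*}
  {p : Filter ι} {e : ι → A} {C : ℝ}

theorem Extends.l_l (hN : N.Extends E M) (b : B) (a : A) (x : X) :
    N.l b (M.l a x) = M.l (E.lmul b a) x := by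
  rw [← hN.l_incl, ← N.l_mul, ← E.incl_lmul, hN.l_incl]

theorem Extends.r_lmul (hN : N.Extends E M) (b : B) (a : A) (x : X) :
    M.r (E.lmul b a) x = M.r a (N.r b x) := by
  rw [← hN.r_incl, E.incl_lmul, N.r_mul, hN.r_incl]

theorem exists_extend_l [CompleteSpace X] [p.NeBot] (he : (p.map e).IsApproximateUnit)
    (hC : ∀ i, ‖e i‖ ≤ C) (hM : ∀ x, x ∈ M.essentialPart p e) (E : Envelope A B) :
    ∃ L : B →L[ℂ] X →L[ℂ] X, ∀ b a x, L b (M.l a x) = M.l (E.lmul b a) x := by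
  have hlim (b : B) (a : A) (x : X) :
      Tendsto (fun i => M.l (E.lmul b (e i)) (M.l a x)) p (𝓝 (M.l (E.lmul b a) x)) := by
    simp only [← M.l_mul, ← E.lmul_mul]
    exact tendsto_clm_apply₂ M.l
      (((E.lmul b).continuous.tendsto a).comp (tendsto_map'_iff.1 (he.tendsto_mul_right a))) x
  obtain ⟨L, hL⟩ := exists_bilinear_tendsto_comp M.l E.lmul hC (denseRange_l hM)
    fun b z => ⟨_, hlim b z.1 z.2⟩
  exact ⟨L, fun b a x => tendsto_nhds_unique (hL b _) (hlim b a x)⟩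

theorem exists_extend_r [CompleteSpace X] [p.NeBot] (he : (p.map e).IsApproximateUnit)
    (hC : ∀ i, ‖e i‖ ≤ C) (hM : ∀ x, x ∈ M.essentialPart p e) (E : Envelope A B) :
    ∃ R : B →L[ℂ] X →L[ℂ] X, ∀ b a x, R b (M.r a x) = M.r (E.rmul b a) x := by
  have hlim (b : B) (a : A) (x : X) :
      Tendsto (fun i => M.r (E.rmul b (e i)) (M.r a x)) p (𝓝 (M.r (E.rmul b a) x)) := by
    simp only [← M.r_mul, ← E.rmul_mul]
    exact tendsto_clm_apply₂ M.r
      (((E.rmul b).continuous.tendsto a).comp (tendsto_map'_iff.1 (he.tendsto_mul_left a))) x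
  obtain ⟨R, hR⟩ := exists_bilinear_tendsto_comp M.r E.rmul hC (denseRange_r hM)
    fun b z => ⟨_, hlim b z.1 z.2⟩
  exact ⟨R, fun b a x => tendsto_nhds_unique (hR b _) (hlim b a x)⟩

theorem exists_extends [CompleteSpace X] [p.NeBot] (he : (p.map e).IsApproximateUnit)
    (hC : ∀ i, ‖e i‖ ≤ C) (hM : ∀ x, x ∈ M.essentialPart p e) (E : Envelope A B) :
    ∃ N : BanachBimodule B X, N.Extends E M := by
  obtain ⟨L, hL⟩ := exists_extend_l he hC hM E
  obtain ⟨R, hR⟩ := exists_extend_r he hC hM E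
  have hl := denseRange_l hM
  have hr := denseRange_r hM
  have hL_mul (b c : B) : L (b * c) = (L b).comp (L c) :=
    clm_eq_of_denseRange hl fun z => by simp [hL, E.lmul_mul_left]
  have hR_mul (b c : B) : R (b * c) = (R c).comp (R b) :=
    clm_eq_of_denseRange hr fun z => by simp [hR, E.rmul_mul_left]
  have hR_l (b : B) (a : A) : (R b).comp (M.l a) = (M.l a).comp (R b) :=
    clm_eq_of_denseRange hr fun z => by simp [← M.l_r, hR]
  have hR_L (b c : B) : (R c).comp (L b) = (L b).comp (R c) :=
    clm_eq_of_denseRange hl fun z => by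
      have hR_l_apply (a : A) (x : X) : R c (M.l a x) = M.l a (R c x) :=
        DFunLike.congr_fun (hR_l c a) x
      simp [hL, hR_l_apply]
  exact ⟨{ l := L
           r := R
           l_mul b c := DFunLike.congr_fun (hL_mul b c)
           r_mul b c := DFunLike.congr_fun (hR_mul b c)
           l_r b c := DFunLike.congr_fun (hR_L b c) },
    { l_incl a := clm_eq_of_denseRange hl fun z => by simp [hL, E.lmul_incl, M.l_mul]
      r_incl a := clm_eq_of_denseRange hr fun z => by simp [hR, E.rmul_incl, M.r_mul] }⟩

theorem IsDerivation.exists_extend_apply_l [p.NeBot] {D : A →L[ℂ] X →L[ℂ] ℂ}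
    (hD : M.IsDerivation D) (he : (p.map e).IsApproximateUnit) (hC : ∀ i, ‖e i‖ ≤ C)
    (hM : ∀ x, x ∈ M.essentialPart p e) (hN : N.Extends E M) :
    ∃ D' : B →L[ℂ] X →L[ℂ] ℂ, ∀ b a x,
      D' b (M.l a x) = D (E.lmul b a) x - D a (N.r b x) := by
  have hlim (b : B) (a : A) (x : X) : Tendsto (fun i => D (E.lmul b (e i)) (M.l a x)) p
      (𝓝 (D (E.lmul b a) x - D a (N.r b x))) := by
    have hmul : Tendsto (fun i => D (E.lmul b (e i * a)) x) p (𝓝 (D (E.lmul b a) x)) :=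
      tendsto_clm_apply₂ D
        (((E.lmul b).continuous.tendsto a).comp (tendsto_map'_iff.1 (he.tendsto_mul_right a))) x
    have hright : Tendsto (fun i => D a (M.r (E.lmul b (e i)) x)) p (𝓝 (D a (N.r b x))) := by
      simp only [hN.r_lmul]
      exact ((D a).continuous.tendsto _).comp (hM (N.r b x)).2
    refine (hmul.sub hright).congr fun i => ?_
    rw [E.lmul_mul, hD.map_mul_apply, add_sub_cancel_left]
  obtain ⟨D', hD'⟩ := exists_bilinear_tendsto_comp D E.lmul hC (denseRange_l hM)
    fun b z => ⟨_, hlim b z.1 z.2⟩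
  exact ⟨D', fun b a x => tendsto_nhds_unique (hD' b _) (hlim b a x)⟩

theorem IsDerivation.exists_extend [p.NeBot] {D : A →L[ℂ] X →L[ℂ] ℂ}
    (hD : M.IsDerivation D) (he : (p.map e).IsApproximateUnit) (hC : ∀ i, ‖e i‖ ≤ C)
    (hM : ∀ x, x ∈ M.essentialPart p e) (hN : N.Extends E M) :
    ∃ D' : B →L[ℂ] X →L[ℂ] ℂ, N.IsDerivation D' ∧ D'.comp E.incl = D := by
  obtain ⟨D', hD'⟩ := hD.exists_extend_apply_l he hC hM hN
  have hl := denseRange_l hM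
  have hN_r (b : B) (a : A) (x : X) : N.r b (M.l a x) = M.l a (N.r b x) := by
    rw [← hN.l_incl, N.l_r]
  refine ⟨D', fun b c => clm_eq_of_denseRange hl fun z => ?_,
    ContinuousLinearMap.ext fun a => clm_eq_of_denseRange hl fun z => ?_⟩
  · simp only [add_apply, ContinuousLinearMap.comp_apply, hD', hN_r, hN.l_l, E.lmul_mul_left,
      N.r_mul]
    ring
  · simp only [ContinuousLinearMap.comp_apply, hD', E.lmul_incl, hN.r_incl, hD.map_mul_apply,
      add_sub_cancel_left]

theorem IsApproxInner.comp_incl {D : B →L[ℂ] X →L[ℂ] ℂ} (h : N.IsApproxInner D)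
    (hN : N.Extends E M) : M.IsApproxInner (D.comp E.incl) := by
  obtain ⟨κ, q, hq, φ, hφ⟩ := h
  refine ⟨κ, q, hq, φ, fun a => ?_⟩
  simpa only [ad, hN.l_incl, hN.r_incl, ContinuousLinearMap.comp_apply] using hφ (E.incl a)

end BanachBimodule

end Extension

/-- If `A` has a bounded approximate identity and an approximately amenable envelope `B`,
then `A` is approximately amenable. -/
theorem statement15 (E : Envelope A B) (hBAI : HasBAI A)
    (hB : IsApproxAmenable.{u} B) : IsApproxAmenable.{u} A := by
  intro X _ _ _ M D hD
  obtain ⟨ι, U, e, C, hC, he⟩ := hBAI.exists_ultrafilter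
  have : CompleteSpace (M.essentialPart U e) :=
    (M.isClosed_essentialPart hC).isComplete.completeSpace_coe
  have hess := BanachBimodule.mem_essentialPart_essential (M := M) he
  obtain ⟨N, hN⟩ := BanachBimodule.exists_extends he hC hess E
  have hderiv : M.IsDerivation D := hD
  obtain ⟨D', hD', hDD'⟩ := (hderiv.restrict_essential he).exists_extend he hC hess hN
  have hinner : N.IsApproxInner D' := hB _ N D' hD'
  have hinner_ess : (M.essential he).IsApproxInner (restrictDual D (M.essentialPart U e)) :=
    hDD' ▸ hinner.comp_incl hN
  exact hinner_ess.of_essential hderiv hC
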